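/- There exist a constant C > 0 and a natural number K such that for every λ ∈ ℂ with Im λ > ρ, ∫₀^∞ |b_λ(t)| Δ(t) dt ≤ C (1+|λ|)^K/(Im λ − ρ). -/

import Mathlib

/-!
Write `c = 1 - iλ` and let `a`, `b` be the two upper parameters of `Φ_λ`. Since
`Re (c - a) = 1 + (Im λ - ρ) / 2 ≥ 1` and `b = (c - a) + (m₁ + m₂ - 1) / 2`, Euler's integral bounds
`Γ(a) Γ(c - a) / Γ(c) ₂F₁(a, b; c; x)` by `B(ρ, 1/2) (1 - x) ^ (-(m₁ + m₂) / 2)`, uniformly in `λ`,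
and replacing `Γ(c - a)` by `Γ(b)` costs a power of `1 + |λ|`. At `x = (cosh t)⁻²` one has
`1 - x = tanh² t`, so the singularity at `t = 0` exactly cancels the zero of
`Δ(t) = tanh t ^ (m₁ + m₂) (2 cosh t) ^ (2ρ)`. What remains is a polynomial in `|λ|` times
`(cosh t) ^ (-(Im λ - ρ))`, whose integral is `O(1 + 1 / (Im λ - ρ))`.
-/

open Complex MeasureTheory Set

noncomputable section

/-- Gauss hypergeometric function ₂F₁ as a power series sum. -/
def hyp (a b c x : ℂ) : ℂ :=
  ∑' n : ℕ, (ascPochhammer ℂ n).eval a * (ascPochhammer ℂ n).eval b /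
    ((ascPochhammer ℂ n).eval c * (n.factorial : ℂ)) * x ^ n

/-- ρ = (m₁ + 2 m₂)/2 -/
def rho (m₁ m₂ : ℕ) : ℝ := ((m₁ : ℝ) + 2 * m₂) / 2

/-- Δ(t) = (2 sinh t)^(m₁+m₂) (2 cosh t)^(m₂) -/
def Del (m₁ m₂ : ℕ) (t : ℝ) : ℝ :=
  (2 * Real.sinh t) ^ (m₁ + m₂) * (2 * Real.cosh t) ^ m₂

/-- The solution Φ_λ. -/
def Phi (m₁ m₂ : ℕ) (l : ℂ) (t : ℝ) : ℂ :=
  ((2 * Real.cosh t : ℝ) : ℂ) ^ (Complex.I * l - (rho m₁ m₂ : ℂ)) *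
    hyp (((rho m₁ m₂ : ℂ) - Complex.I * l) / 2) (((m₁ : ℂ) + 2) / 4 - Complex.I * l / 2)
      (1 - Complex.I * l) ((((Real.cosh t) ^ 2 : ℝ) : ℂ))⁻¹

/-- The function b_λ. -/
def bfun (m₁ m₂ : ℕ) (l : ℂ) (t : ℝ) : ℂ :=
  (2 : ℂ) ^ (-(rho m₁ m₂ : ℂ) - 1 - Complex.I * l) *
    (Complex.Gamma (((rho m₁ m₂ : ℂ) - Complex.I * l) / 2) *
      Complex.Gamma (((m₁ : ℂ) + 2) / 4 - Complex.I * l / 2) /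
      (Complex.Gamma (((m₁ : ℂ) + (m₂ : ℂ) + 1) / 2) * Complex.Gamma (1 - Complex.I * l))) *
    Phi m₁ m₂ l t

section Beta

theorem norm_cpow_mul_one_sub_cpow {u : ℝ} (hu : u ∈ Ioo (0 : ℝ) 1) (p q : ℂ) :
    ‖(u : ℂ) ^ p * (1 - (u : ℂ)) ^ q‖ = u ^ p.re * (1 - u) ^ q.re := by
  rw [norm_mul, norm_cpow_eq_rpow_re_of_pos hu.1, ← ofReal_one, ← ofReal_sub,
    norm_cpow_eq_rpow_re_of_pos (sub_pos.2 hu.2)]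

theorem intervalIntegrable_rpow_mul_one_sub_rpow {r s : ℝ} (hr : 0 < r) (hs : 0 < s) :
    IntervalIntegrable (fun u : ℝ ↦ u ^ (r - 1) * (1 - u) ^ (s - 1)) volume 0 1 := by
  have h := (betaIntegral_convergent (u := r) (v := s) (by simpa) (by simpa)).norm
  rw [intervalIntegrable_iff_integrableOn_Ioo_of_le zero_le_one] at h ⊢
  refine h.congr_fun (fun u hu ↦ ?_) measurableSet_Ioo
  simpa using norm_cpow_mul_one_sub_cpow hu ((r : ℂ) - 1) ((s : ℂ) - 1)

theorem integral_rpow_mul_one_sub_rpow {r s : ℝ} (hr : 0 < r) (hs : 0 < s) :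
    ∫ u in (0 : ℝ)..1, u ^ (r - 1) * (1 - u) ^ (s - 1) = ProbabilityTheory.beta r s := by
  rw [ProbabilityTheory.beta_eq_betaIntegralReal r s hr hs, betaIntegral,
    ← ofReal_re (∫ _ in _.._, _), ← intervalIntegral.integral_ofReal]
  refine congrArg re (intervalIntegral.integral_congr fun u hu ↦ ?_)
  rw [uIcc_of_le zero_le_one] at hu
  simp only [ofReal_mul, ofReal_cpow hu.1, ofReal_cpow (sub_nonneg.2 hu.2), ofReal_sub, ofReal_one]

theorem betaIntegral_add_natCast {a v : ℂ} (ha : 0 < a.re) (hv : 0 < v.re) (n : ℕ) :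
    betaIntegral (a + n) v = betaIntegral a v *
      ((ascPochhammer ℂ n).eval a / (ascPochhammer ℂ n).eval (a + v)) := by
  have re_add_natCast_pos {z : ℂ} (hz : 0 < z.re) : 0 < (z + n).re := by
    rw [add_re, natCast_re]; positivity
  have ne_neg_natCast {z : ℂ} (hz : 0 < z.re) (k : ℕ) : z ≠ -k := by
    rintro rfl
    exact hz.not_ge (by simp)
  have hav : 0 < (a + v).re := add_pos ha hv
  rw [betaIntegral_eq_Gamma_mul_div _ _ (re_add_natCast_pos ha) hv,
    betaIntegral_eq_Gamma_mul_div _ _ ha hv, add_right_comm,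
    ← Gamma_add_nat_div_Gamma_eq a (ne_neg_natCast ha),
    ← Gamma_add_nat_div_Gamma_eq (a + v) (ne_neg_natCast hav)]
  have := Gamma_ne_zero_of_re_pos ha
  have := Gamma_ne_zero_of_re_pos hav
  have := Gamma_ne_zero_of_re_pos (re_add_natCast_pos hav)
  field_simp

theorem betaIntegral_add_natCast_eq_integral {a : ℂ} (v : ℂ) (n : ℕ) :
    betaIntegral (a + n) v =
      ∫ u : ℝ in (0 : ℝ)..1, (u : ℂ) ^ n * ((u : ℂ) ^ (a - 1) * (1 - (u : ℂ)) ^ (v - 1)) := by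
  refine intervalIntegral.integral_congr_ae (.of_forall fun u hu ↦ ?_)
  rw [uIoc_of_le zero_le_one] at hu
  have hu0 : (u : ℂ) ≠ 0 := ofReal_ne_zero.2 hu.1.ne'
  rw [add_sub_right_comm, cpow_add _ _ hu0, cpow_natCast]
  ring

end Beta

section Hypergeometric

theorem hasSum_ascPochhammer_mul_pow (b : ℂ) {z : ℂ} (hz : ‖z‖ < 1) :
    HasSum (fun n : ℕ ↦ (ascPochhammer ℂ n).eval b / (n.factorial : ℂ) * z ^ n)
      ((1 - z) ^ (-b)) := by
  have hchoose (n : ℕ) :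
      Ring.choose (b + n - 1) n = (ascPochhammer ℂ n).eval b / (n.factorial : ℂ) := by
    rw [← Ring.multichoose_eq, eq_div_iff (Nat.cast_ne_zero.2 n.factorial_ne_zero), mul_comm,
      ← nsmul_eq_mul, Ring.factorial_nsmul_multichoose_eq_ascPochhammer,
      Polynomial.ascPochhammer_smeval_eq_eval]
  have hsum := (one_div_one_sub_cpow_hasFPowerSeriesOnBall_zero b).hasSum (y := z)
    (by simpa [enorm_eq_nnnorm, ← NNReal.coe_lt_one] using hz)
  rw [zero_add, one_div, ← cpow_neg] at hsum
  simpa [FormalMultilinearSeries.ofScalars_apply_eq, hchoose, mul_comm] using hsum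

theorem betaIntegral_mul_ordinaryHypergeometric_eq_integral {a c x : ℂ} (b : ℂ) (ha : 0 < a.re)
    (hac : a.re < c.re) (hx : ‖x‖ < 1) :
    betaIntegral a (c - a) * ordinaryHypergeometric a b c x =
      ∫ u : ℝ in (0 : ℝ)..1,
        (1 - (u * x : ℂ)) ^ (-b) * ((u : ℂ) ^ (a - 1) * (1 - (u : ℂ)) ^ (c - a - 1)) := by
  have hca : 0 < (c - a).re := by rwa [sub_re, sub_pos]
  have hconv := betaIntegral_convergent ha hca
  have hnorm {u : ℝ} (hu : u ∈ uIoc (0 : ℝ) 1) : ‖(u * x : ℂ)‖ ≤ ‖x‖ := by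
    rw [uIoc_of_le zero_le_one] at hu
    rw [norm_mul, Complex.norm_of_nonneg hu.1.le]
    exact mul_le_of_le_one_left (norm_nonneg _) hu.2
  have hsum := intervalIntegral.hasSum_integral_of_dominated_convergence
    (μ := volume) (a := (0 : ℝ)) (b := 1)
    (F := fun (n : ℕ) (u : ℝ) ↦ (ascPochhammer ℂ n).eval b / (n.factorial : ℂ) *
      (u * x : ℂ) ^ n * ((u : ℂ) ^ (a - 1) * (1 - (u : ℂ)) ^ (c - a - 1)))
    (fun n u ↦ ‖(ascPochhammer ℂ n).eval b / (n.factorial : ℂ) * x ^ n‖ *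
      ‖(u : ℂ) ^ (a - 1) * (1 - (u : ℂ)) ^ (c - a - 1)‖)
    (fun n ↦ .mul (by fun_prop) hconv.aestronglyMeasurable_restrict_uIoc)
    (fun n ↦ .of_forall fun u hu ↦ by
      rw [norm_mul, norm_mul _ ((u * x : ℂ) ^ n), norm_mul _ (x ^ n), norm_pow, norm_pow]
      gcongr
      exact hnorm hu)
    (.of_forall fun u _ ↦ (hasSum_ascPochhammer_mul_pow b hx).summable.norm.mul_right _)
    (by simpa only [tsum_mul_right] using hconv.norm.const_mul _)
    (.of_forall fun u hu ↦
      (hasSum_ascPochhammer_mul_pow b ((hnorm hu).trans_lt hx)).mul_right _)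
  rw [← hsum.tsum_eq, ordinaryHypergeometric_eq_tsum, ← tsum_mul_left]
  refine tsum_congr fun n ↦ ?_
  calc _ = (ascPochhammer ℂ n).eval b / (n.factorial : ℂ) * x ^ n *
        betaIntegral (a + n) (c - a) := by
        rw [betaIntegral_add_natCast ha hca, add_sub_cancel, smul_eq_mul]
        ring
    _ = _ := by
        rw [betaIntegral_add_natCast_eq_integral, ← intervalIntegral.integral_const_mul]
        simp only [mul_pow]
        congr! 2
        ring

theorem one_sub_mul_rpow_neg_mul_one_sub_rpow_le {u x β q s : ℝ} (hu₀ : 0 ≤ u) (hu₁ : u < 1)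
    (hx₀ : 0 ≤ x) (hx₁ : x < 1) (hsq : s ≤ q) (hqβ : q ≤ β + s) :
    (1 - u * x) ^ (-β) * (1 - u) ^ (q - 1) ≤ (1 - u) ^ (s - 1) * (1 - x) ^ (-(β - q + s)) := by
  have hu : 0 < 1 - u := sub_pos.2 hu₁
  have hx : 0 < 1 - x := sub_pos.2 hx₁
  have hle_u : 1 - u ≤ 1 - u * x := sub_le_sub_left (mul_le_of_le_one_right hu₀ hx₁.le) 1
  have hle_x : 1 - x ≤ 1 - u * x := sub_le_sub_left (mul_le_of_le_one_left hx₀ hu₁.le) 1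
  have hux : 0 < 1 - u * x := hu.trans_le hle_u
  calc (1 - u * x) ^ (-β) * (1 - u) ^ (q - 1)
      = (1 - u * x) ^ (-(q - s)) * (1 - u * x) ^ (-(β - q + s)) * (1 - u) ^ (q - 1) := by
        rw [← Real.rpow_add hux]
        ring_nf
    _ ≤ (1 - u) ^ (-(q - s)) * (1 - x) ^ (-(β - q + s)) * (1 - u) ^ (q - 1) := by
        gcongr ?_ * ?_ * _
        · exact Real.rpow_le_rpow_of_nonpos hu hle_u (by linarith)
        · exact Real.rpow_le_rpow_of_nonpos hx hle_x (by linarith)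
    _ = (1 - u) ^ (s - 1) * (1 - x) ^ (-(β - q + s)) := by
        rw [mul_right_comm, ← Real.rpow_add hu]
        ring_nf

theorem norm_betaIntegral_mul_ordinaryHypergeometric_le {a b c : ℂ} {r s x : ℝ} (hr : 0 < r)
    (hra : r ≤ a.re) (hs : 0 < s) (hsc : s ≤ (c - a).re) (hcb : (c - a).re ≤ b.re + s)
    (hx₀ : 0 ≤ x) (hx₁ : x < 1) :
    ‖betaIntegral a (c - a) * ordinaryHypergeometric a b c (x : ℂ)‖ ≤
      ProbabilityTheory.beta r s * (1 - x) ^ (-(b.re - (c - a).re + s)) := by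
  have hac : a.re < c.re := sub_pos.1 (hs.trans_le hsc)
  rw [betaIntegral_mul_ordinaryHypergeometric_eq_integral b (hr.trans_le hra) hac
      (by rwa [Complex.norm_of_nonneg hx₀]),
    ← integral_rpow_mul_one_sub_rpow hr hs, ← intervalIntegral.integral_mul_const]
  refine intervalIntegral.norm_integral_le_of_norm_le zero_le_one ?_
    ((intervalIntegrable_rpow_mul_one_sub_rpow hr hs).mul_const _)
  filter_upwards [compl_mem_ae_iff.2 (measure_singleton (1 : ℝ))] with u hu1 hu
  have hu' : u ∈ Ioo (0 : ℝ) 1 := ⟨hu.1, hu.2.lt_of_ne hu1⟩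
  have hux : 0 < 1 - u * x := sub_pos.2 ((mul_le_of_le_one_left hx₀ hu.2).trans_lt hx₁)
  have hnorm : ‖(1 - (u * x : ℂ)) ^ (-b)‖ = (1 - u * x) ^ (-b.re) := by
    rw [← neg_re, ← norm_cpow_eq_rpow_re_of_pos hux]
    push_cast
    rfl
  rw [norm_mul, hnorm, norm_cpow_mul_one_sub_cpow hu', sub_re a, sub_re (c - a), one_re]
  calc (1 - u * x) ^ (-b.re) * (u ^ (a.re - 1) * (1 - u) ^ ((c - a).re - 1))
      = u ^ (a.re - 1) * ((1 - u * x) ^ (-b.re) * (1 - u) ^ ((c - a).re - 1)) := by ring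
    _ ≤ u ^ (r - 1) * ((1 - u) ^ (s - 1) * (1 - x) ^ (-(b.re - (c - a).re + s))) := by
        have hpow : u ^ (a.re - 1) ≤ u ^ (r - 1) :=
          Real.rpow_le_rpow_of_exponent_ge hu'.1 hu.2 (by linarith)
        have hu₁ : 0 < 1 - u := sub_pos.2 hu'.2
        exact mul_le_mul hpow
          (one_sub_mul_rpow_neg_mul_one_sub_rpow_le hu'.1.le hu'.2 hx₀ hx₁ hsc hcb)
          (by positivity) (Real.rpow_nonneg hu'.1.le _)
    _ = _ := (mul_assoc _ _ _).symm

end Hypergeometric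

section Gamma

theorem norm_betaIntegral_le {u v : ℂ} (hu : 0 < u.re) (hv : 0 < v.re) :
    ‖betaIntegral u v‖ ≤ ProbabilityTheory.beta u.re v.re := by
  simpa using norm_betaIntegral_mul_ordinaryHypergeometric_le (a := u) (b := 0) (c := u + v)
    (x := 0) hu le_rfl hv (by simp) (by simp) le_rfl one_pos

theorem norm_Gamma_mul_Gamma_re_add_le {z : ℂ} {s : ℝ} (hz : 0 < z.re) (hs : 0 ≤ s) :
    ‖Gamma z‖ * Real.Gamma (z.re + s) ≤ ‖Gamma (z + s)‖ * Real.Gamma z.re := by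
  rcases hs.eq_or_lt with rfl | hs
  · simp
  have hzs : 0 < (z + s).re := by rw [add_re, ofReal_re]; positivity
  have hΓ : 0 < Real.Gamma s := Real.Gamma_pos_of_pos hs
  have hbeta := norm_betaIntegral_le hz (v := s) (by simpa)
  rw [betaIntegral_eq_Gamma_mul_div _ _ hz (by simpa), ProbabilityTheory.beta, ofReal_re, norm_div,
    norm_mul, Gamma_ofReal, Complex.norm_of_nonneg hΓ.le,
    div_le_div_iff₀ (norm_pos_iff.2 (Gamma_ne_zero_of_re_pos hzs))
      (Real.Gamma_pos_of_pos (by positivity))] at hbeta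
  exact le_of_mul_le_mul_left (by linarith) hΓ

theorem Gamma_le_Gamma_add_natCast {x : ℝ} (hx : 1 ≤ x) (n : ℕ) :
    Real.Gamma x ≤ Real.Gamma (x + n) := by
  induction n with
  | zero => simp
  | succ n ih =>
    have hxn : 1 ≤ x + n := le_add_of_le_of_nonneg hx n.cast_nonneg
    rw [Nat.cast_succ, ← add_assoc, Real.Gamma_add_one (by positivity)]
    exact ih.trans (le_mul_of_one_le_left (Real.Gamma_pos_of_pos (by positivity)).le hxn)

theorem Gamma_add_le_Gamma_add_natCast {x s : ℝ} {n : ℕ} (hx : 1 ≤ x) (hs : 0 ≤ s) (hsn : s ≤ n) :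
    Real.Gamma (x + s) ≤ Real.Gamma (x + n) := by
  have hmem : x + s ∈ Icc x (x + n) := ⟨by linarith, by linarith⟩
  have hmax := Real.convexOn_Gamma.le_max_of_mem_Icc (show 0 < x by positivity)
    (show 0 < x + n by positivity) hmem
  rwa [max_eq_right (Gamma_le_Gamma_add_natCast hx n)] at hmax

theorem norm_ascPochhammer_eval_le {R : Type*} [NormedRing R] [NormOneClass R] (z : R) (n : ℕ) :
    ‖(ascPochhammer R n).eval z‖ ≤ (‖z‖ + n) ^ n := by
  induction n with
  | zero => simp
  | succ n ih =>
    rw [ascPochhammer_succ_eval, pow_succ]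
    refine (norm_mul_le _ _).trans ?_
    have hzn : ‖z + n‖ ≤ ‖z‖ + n :=
      norm_add_le_of_le le_rfl ((Nat.norm_cast_le n).trans_eq (by rw [norm_one, mul_one]))
    have hmono : ‖z‖ + n ≤ ‖z‖ + (n + 1 : ℕ) := by push_cast; linarith
    gcongr
    · exact ih.trans (by gcongr)
    · exact hzn.trans hmono

theorem norm_Gamma_add_le {z : ℂ} {s : ℝ} {n : ℕ} (hz : 1 ≤ z.re) (hs : 0 ≤ s) (hsn : s ≤ n) :
    ‖Gamma (z + s)‖ ≤ (‖z‖ + n) ^ n * ‖Gamma z‖ := by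
  have hz₀ : 0 < z.re := by positivity
  have hΓ : 0 < Real.Gamma (z.re + n) := Real.Gamma_pos_of_pos (by positivity)
  have hne (k : ℕ) : z ≠ -k := by
    rintro rfl
    exact hz₀.not_ge (by simp)
  have hshift : ‖Gamma (z + s)‖ * Real.Gamma (z.re + n) ≤
      ‖Gamma (z + n)‖ * Real.Gamma (z.re + s) := by
    have h := norm_Gamma_mul_Gamma_re_add_le (z := z + s) (s := n - s)
      (by rw [add_re, ofReal_re]; positivity) (sub_nonneg.2 hsn)
    simpa [add_assoc] using h
  calc ‖Gamma (z + s)‖ ≤ ‖Gamma (z + n)‖ := by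
        refine le_of_mul_le_mul_right (hshift.trans ?_) hΓ
        gcongr
        exact Gamma_add_le_Gamma_add_natCast hz hs hsn
    _ = ‖(ascPochhammer ℂ n).eval z‖ * ‖Gamma z‖ := by
        rw [← Gamma_add_nat_div_Gamma_eq z hne, ← norm_mul,
          div_mul_cancel₀ _ (Gamma_ne_zero_of_re_pos hz₀)]
    _ ≤ (‖z‖ + n) ^ n * ‖Gamma z‖ := by
        gcongr
        exact norm_ascPochhammer_eval_le z n

end Gamma

theorem norm_Gamma_mul_Gamma_div_mul_ordinaryHypergeometric_le {a b c : ℂ} {r d x : ℝ} {n : ℕ}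
    (hr : 0 < r) (hra : r ≤ a.re) (hca : 1 ≤ (c - a).re) (hb : b = c - a + d) (hd : 0 ≤ d)
    (hdn : d ≤ n) (hx₀ : 0 ≤ x) (hx₁ : x < 1) :
    ‖Gamma a * Gamma b / Gamma c * ordinaryHypergeometric a b c (x : ℂ)‖ ≤
      (‖c - a‖ + n) ^ n * (ProbabilityTheory.beta r (1 / 2) * (1 - x) ^ (-(d + 1 / 2))) := by
  have hca₀ : 0 < (c - a).re := one_pos.trans_le hca
  have hbre : b.re = (c - a).re + d := by rw [hb, add_re, ofReal_re]
  have hΓ : Gamma (c - a) ≠ 0 := Gamma_ne_zero_of_re_pos hca₀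
  have hratio : ‖Gamma b / Gamma (c - a)‖ ≤ (‖c - a‖ + n) ^ n := by
    rw [norm_div, div_le_iff₀ (norm_pos_iff.2 hΓ), hb]
    exact norm_Gamma_add_le hca hd hdn
  have heuler := norm_betaIntegral_mul_ordinaryHypergeometric_le (b := b) (c := c) (s := 1 / 2)
    hr hra one_half_pos (by linarith) (by linarith) hx₀ hx₁
  rw [hbre, add_sub_cancel_left] at heuler
  calc _ = ‖Gamma b / Gamma (c - a)‖ *
        ‖betaIntegral a (c - a) * ordinaryHypergeometric a b c (x : ℂ)‖ := by
        rw [betaIntegral_eq_Gamma_mul_div _ _ (hr.trans_le hra) hca₀, add_sub_cancel, ← norm_mul]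
        congr 1
        field_simp
    _ ≤ _ := by gcongr

section Hyperbolic

theorem one_sub_inv_cosh_sq (t : ℝ) : 1 - (Real.cosh t ^ 2)⁻¹ = Real.tanh t ^ 2 := by
  have := (Real.cosh_pos t).ne'
  rw [Real.tanh_eq_sinh_div_cosh, div_pow, Real.sinh_sq]
  field_simp

theorem cosh_rpow_neg_le {δ : ℝ} (hδ₀ : 0 ≤ δ) (hδ₁ : δ ≤ 1) (t : ℝ) :
    Real.cosh t ^ (-δ) ≤ 2 * Real.exp (-δ * t) := by
  have hcosh : Real.exp t / 2 ≤ Real.cosh t := by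
    rw [Real.cosh_eq]
    linarith [Real.exp_pos (-t)]
  calc Real.cosh t ^ (-δ) ≤ (Real.exp t / 2) ^ (-δ) :=
        Real.rpow_le_rpow_of_nonpos (by positivity) hcosh (neg_nonpos.2 hδ₀)
    _ = 2 ^ δ * Real.exp (-δ * t) := by
        rw [Real.div_rpow (Real.exp_pos _).le zero_le_two, Real.rpow_neg zero_le_two,
          ← Real.exp_mul, div_inv_eq_mul, mul_comm t, mul_comm]
    _ ≤ 2 * Real.exp (-δ * t) := by
        gcongr
        simpa using Real.rpow_le_rpow_of_exponent_le one_le_two hδ₁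

theorem lintegral_exp_neg_mul_Ioi {κ : ℝ} (hκ : 0 < κ) :
    ∫⁻ t in Ioi (0 : ℝ), ENNReal.ofReal (Real.exp (-κ * t)) = ENNReal.ofReal κ⁻¹ := by
  have hneg : -κ < 0 := neg_neg_of_pos hκ
  rw [← ofReal_integral_eq_lintegral_ofReal (integrableOn_exp_mul_Ioi hneg 0)
    (.of_forall fun t ↦ (Real.exp_pos _).le), integral_exp_mul_Ioi hneg]
  simp

theorem lintegral_cosh_rpow_neg_le {δ : ℝ} (hδ : 0 < δ) :
    ∫⁻ t in Ioi (0 : ℝ), ENNReal.ofReal (Real.cosh t ^ (-δ)) ≤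
      ENNReal.ofReal (2 * ((1 + δ) / δ)) := by
  -- Some `κ ≤ min δ 1` is needed because the factor `2 ^ δ` in the exponential bound is unbounded.
  set κ := δ / (1 + δ) with hκ
  have hκ₀ : 0 < κ := by positivity
  have hκ₁ : κ ≤ 1 := div_le_one_of_le₀ (by linarith) (by positivity)
  have hκδ : κ ≤ δ := div_le_self hδ.le (by linarith)
  calc _ ≤ ∫⁻ t in Ioi (0 : ℝ), ENNReal.ofReal 2 * ENNReal.ofReal (Real.exp (-κ * t)) := by
        refine lintegral_mono fun t ↦ ?_
        rw [← ENNReal.ofReal_mul zero_le_two]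
        exact ENNReal.ofReal_le_ofReal <| (Real.rpow_le_rpow_of_exponent_le
          (Real.one_le_cosh t) (neg_le_neg hκδ)).trans (cosh_rpow_neg_le hκ₀.le hκ₁ t)
    _ = ENNReal.ofReal (2 * ((1 + δ) / δ)) := by
        rw [lintegral_const_mul' _ _ ENNReal.ofReal_ne_top, lintegral_exp_neg_mul_Ioi hκ₀, hκ,
          inv_div, ENNReal.ofReal_mul zero_le_two]

end Hyperbolic

section JacobiFunctions

theorem hyp_eq_ordinaryHypergeometric (a b c x : ℂ) :
    hyp a b c x = ordinaryHypergeometric a b c x := by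
  rw [hyp, ordinaryHypergeometric_eq_tsum]
  refine tsum_congr fun n ↦ ?_
  rw [smul_eq_mul, div_eq_mul_inv, mul_inv]
  ring

theorem Del_eq_tanh_pow_mul_rpow (m₁ m₂ : ℕ) (t : ℝ) :
    Del m₁ m₂ t = Real.tanh t ^ (m₁ + m₂) * (2 * Real.cosh t) ^ (2 * rho m₁ m₂) := by
  have hrho : 2 * rho m₁ m₂ = (m₁ + m₂ + m₂ : ℕ) := by
    rw [rho]
    push_cast
    ring
  have hcosh := (Real.cosh_pos t).ne'
  rw [hrho, Real.rpow_natCast, pow_add _ (m₁ + m₂), ← mul_assoc, ← mul_pow,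
    Real.tanh_eq_sinh_div_cosh, Del]
  field_simp

theorem rho_pos {m₁ m₂ : ℕ} (hm : 0 < m₁ + m₂) : 0 < rho m₁ m₂ := by
  have : (0 : ℝ) < m₁ + m₂ := by exact_mod_cast hm
  rw [rho]
  linarith [(m₂.cast_nonneg : (0 : ℝ) ≤ m₂)]

/-- The first upper parameter of the hypergeometric function in `Φ_λ`. -/
def hypParamA (m₁ m₂ : ℕ) (l : ℂ) : ℂ := ((rho m₁ m₂ : ℂ) - I * l) / 2

/-- The second upper parameter of the hypergeometric function in `Φ_λ`. -/
def hypParamB (m₁ : ℕ) (l : ℂ) : ℂ := ((m₁ : ℂ) + 2) / 4 - I * l / 2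

/-- The lower parameter of the hypergeometric function in `Φ_λ`. -/
def hypParamC (l : ℂ) : ℂ := 1 - I * l

section Parameters

variable (m₁ m₂ : ℕ) (l : ℂ)

theorem re_hypParamA : (hypParamA m₁ m₂ l).re = (rho m₁ m₂ + l.im) / 2 := by
  simp [hypParamA]

theorem hypParamC_sub_hypParamA :
    hypParamC l - hypParamA m₁ m₂ l = 1 - ((rho m₁ m₂ : ℂ) + I * l) / 2 := by
  rw [hypParamA, hypParamC]
  ring

theorem re_hypParamC_sub_hypParamA :
    (hypParamC l - hypParamA m₁ m₂ l).re = 1 + (l.im - rho m₁ m₂) / 2 := by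
  simp [hypParamC_sub_hypParamA]
  ring

theorem hypParamB_eq :
    hypParamB m₁ l = hypParamC l - hypParamA m₁ m₂ l + (((m₁ + m₂ - 1) / 2 : ℝ) : ℂ) := by
  rw [hypParamC_sub_hypParamA, hypParamB, rho]
  push_cast
  ring

theorem norm_hypParamC_sub_hypParamA_le :
    ‖hypParamC l - hypParamA m₁ m₂ l‖ ≤ 1 + (rho m₁ m₂ + ‖l‖) / 2 := by
  have hrho : 0 ≤ rho m₁ m₂ := by unfold rho; positivity
  rw [hypParamC_sub_hypParamA]
  calc _ ≤ ‖(1 : ℂ)‖ + ‖((rho m₁ m₂ : ℂ) + I * l) / 2‖ := norm_sub_le _ _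
    _ ≤ 1 + (‖(rho m₁ m₂ : ℂ)‖ + ‖I * l‖) / 2 := by
        rw [norm_one, norm_div, norm_ofNat]
        gcongr
        exact norm_add_le _ _
    _ = 1 + (rho m₁ m₂ + ‖l‖) / 2 := by
        rw [Complex.norm_of_nonneg hrho, norm_mul, norm_I, one_mul]

end Parameters

theorem norm_bfun_mul_Del (m₁ m₂ : ℕ) (l : ℂ) (t : ℝ) :
    ‖bfun m₁ m₂ l t‖ * Del m₁ m₂ t =
      Real.cosh t ^ (-(l.im - rho m₁ m₂)) / (2 * ‖Gamma (((m₁ : ℂ) + (m₂ : ℂ) + 1) / 2)‖) *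
        (‖Gamma (hypParamA m₁ m₂ l) * Gamma (hypParamB m₁ l) / Gamma (hypParamC l) *
          ordinaryHypergeometric (hypParamA m₁ m₂ l) (hypParamB m₁ l) (hypParamC l)
            (((Real.cosh t ^ 2)⁻¹ : ℝ) : ℂ)‖ * Real.tanh t ^ (m₁ + m₂)) := by
  have hcosh : 0 < Real.cosh t := Real.cosh_pos t
  have htwo : ‖(2 : ℂ) ^ (-(rho m₁ m₂ : ℂ) - 1 - I * l)‖ = 2 ^ (-rho m₁ m₂ - 1 + l.im) := by
    rw [← ofReal_ofNat, norm_cpow_eq_rpow_re_of_pos two_pos]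
    simp
  have htwocosh : ‖((2 * Real.cosh t : ℝ) : ℂ) ^ (I * l - (rho m₁ m₂ : ℂ))‖ =
      (2 * Real.cosh t) ^ (-l.im - rho m₁ m₂) := by
    rw [norm_cpow_eq_rpow_re_of_pos (by positivity)]
    simp
  have hpow : (2 : ℝ) ^ (-rho m₁ m₂ - 1 + l.im) * (2 * Real.cosh t) ^ (-l.im - rho m₁ m₂) *
      (2 * Real.cosh t) ^ (2 * rho m₁ m₂) = Real.cosh t ^ (-(l.im - rho m₁ m₂)) / 2 := by
    rw [mul_assoc, ← Real.rpow_add (by positivity), Real.mul_rpow zero_le_two hcosh.le,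
      ← mul_assoc, ← Real.rpow_add two_pos, div_eq_inv_mul, ← Real.rpow_neg_one 2]
    congr 2 <;> ring
  rw [bfun, Phi, hyp_eq_ordinaryHypergeometric, Del_eq_tanh_pow_mul_rpow, hypParamA, hypParamB,
    hypParamC, ofReal_inv]
  simp only [norm_mul, norm_div, htwo, htwocosh]
  rw [← div_div (Real.cosh t ^ _) 2, ← hpow]
  ring

theorem norm_bfun_mul_Del_le {m₁ m₂ : ℕ} (hm : 0 < m₁ + m₂) {l : ℂ} (hl : rho m₁ m₂ < l.im)
    {t : ℝ} (ht : 0 < t) :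
    ‖bfun m₁ m₂ l t‖ * Del m₁ m₂ t ≤
      Real.cosh t ^ (-(l.im - rho m₁ m₂)) / (2 * ‖Gamma (((m₁ : ℂ) + (m₂ : ℂ) + 1) / 2)‖) *
        ((‖hypParamC l - hypParamA m₁ m₂ l‖ + ((m₁ + m₂) / 2 : ℕ)) ^ ((m₁ + m₂) / 2) *
          ProbabilityTheory.beta (rho m₁ m₂) (1 / 2)) := by
  have htanh : 0 < Real.tanh t := by
    rw [Real.tanh_eq_sinh_div_cosh]
    exact div_pos (Real.sinh_pos_iff.2 ht) (Real.cosh_pos t)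
  have hsq : 1 - (Real.cosh t ^ 2)⁻¹ = Real.tanh t ^ 2 := one_sub_inv_cosh_sq t
  have hcancel : (1 - (Real.cosh t ^ 2)⁻¹) ^ (-(((m₁ : ℝ) + m₂ - 1) / 2 + 1 / 2)) *
      Real.tanh t ^ (m₁ + m₂) = 1 := by
    rw [hsq, ← Real.rpow_natCast, ← Real.rpow_mul htanh.le, ← Real.rpow_natCast,
      ← Real.rpow_add htanh]
    push_cast
    ring_nf
    exact Real.rpow_zero _
  have hm' : (1 : ℝ) ≤ m₁ + m₂ := by exact_mod_cast hm
  have hfloor : (m₁ + m₂ : ℝ) ≤ 2 * ((m₁ + m₂) / 2 : ℕ) + 1 := by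
    exact_mod_cast (by lia : m₁ + m₂ ≤ 2 * ((m₁ + m₂) / 2) + 1)
  have hhyp := norm_Gamma_mul_Gamma_div_mul_ordinaryHypergeometric_le (a := hypParamA m₁ m₂ l)
    (n := (m₁ + m₂) / 2) (rho_pos hm) (by rw [re_hypParamA]; linarith)
    (by rw [re_hypParamC_sub_hypParamA]; linarith) (hypParamB_eq m₁ m₂ l) (by linarith)
    (by linarith) (inv_nonneg.2 (sq_nonneg _)) (sub_pos.1 (hsq ▸ pow_pos htanh 2))
  rw [norm_bfun_mul_Del]
  refine mul_le_mul_of_nonneg_left ?_ (by positivity)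
  refine (mul_le_mul_of_nonneg_right hhyp (by positivity)).trans_eq ?_
  rw [mul_assoc, mul_assoc, hcancel, mul_one]

theorem exists_norm_bfun_mul_Del_le {m₁ m₂ : ℕ} (hm : 0 < m₁ + m₂) :
    ∃ C : ℝ, 0 < C ∧ ∀ l : ℂ, rho m₁ m₂ < l.im → ∀ t : ℝ, 0 < t →
      ‖bfun m₁ m₂ l t‖ * Del m₁ m₂ t ≤
        C * (1 + ‖l‖) ^ ((m₁ + m₂) / 2) * Real.cosh t ^ (-(l.im - rho m₁ m₂)) := by
  set n := (m₁ + m₂) / 2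
  set G := ‖Gamma (((m₁ : ℂ) + (m₂ : ℂ) + 1) / 2)‖
  set B := ProbabilityTheory.beta (rho m₁ m₂) (1 / 2)
  have hrho : 0 < rho m₁ m₂ := rho_pos hm
  have hB : 0 < B := ProbabilityTheory.beta_pos hrho one_half_pos
  have hG : 0 < G := by
    refine norm_pos_iff.2 (Gamma_ne_zero_of_re_pos ?_)
    rw [← Nat.cast_add, ← Nat.cast_add_one, div_ofNat_re, natCast_re]
    positivity
  refine ⟨(1 + rho m₁ m₂ + n) ^ n * B / (2 * G), by positivity, fun l hl t ht ↦ ?_⟩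
  have hpoly : ‖hypParamC l - hypParamA m₁ m₂ l‖ + n ≤ (1 + rho m₁ m₂ + n) * (1 + ‖l‖) := by
    have : 0 ≤ (rho m₁ m₂ + n) * ‖l‖ := by positivity
    linarith [norm_hypParamC_sub_hypParamA_le m₁ m₂ l, norm_nonneg l]
  calc _ ≤ Real.cosh t ^ (-(l.im - rho m₁ m₂)) / (2 * G) *
        ((‖hypParamC l - hypParamA m₁ m₂ l‖ + n) ^ n * B) := norm_bfun_mul_Del_le hm hl ht
    _ ≤ Real.cosh t ^ (-(l.im - rho m₁ m₂)) / (2 * G) *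
        (((1 + rho m₁ m₂ + n) * (1 + ‖l‖)) ^ n * B) := by gcongr
    _ = _ := by
        rw [mul_pow]
        ring

end JacobiFunctions

theorem stmt6_general {m₁ m₂ : ℕ} (hm : 0 < m₁ + m₂) :
    ∃ C : ℝ, 0 < C ∧ ∀ l : ℂ, rho m₁ m₂ < l.im →
      (∫⁻ t in Ioi (0 : ℝ), ENNReal.ofReal (‖bfun m₁ m₂ l t‖ * Del m₁ m₂ t)) ≤
        ENNReal.ofReal (C * (1 + ‖l‖) ^ ((m₁ + m₂) / 2 + 1) / (l.im - rho m₁ m₂)) := by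
  obtain ⟨C, hC, hbound⟩ := exists_norm_bfun_mul_Del_le hm
  refine ⟨2 * C, by positivity, fun l hl ↦ ?_⟩
  set A := C * (1 + ‖l‖) ^ ((m₁ + m₂) / 2) with hA
  set δ := l.im - rho m₁ m₂
  have hA₀ : 0 ≤ A := by positivity
  have hδ₀ : 0 < δ := sub_pos.2 hl
  have hδl : δ ≤ ‖l‖ := by linarith [rho_pos hm, (le_abs_self _).trans (abs_im_le_norm l)]
  calc _ ≤ ∫⁻ t in Ioi (0 : ℝ), ENNReal.ofReal A * ENNReal.ofReal (Real.cosh t ^ (-δ)) := by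
        refine setLIntegral_mono' measurableSet_Ioi fun t ht ↦ ?_
        rw [← ENNReal.ofReal_mul hA₀]
        exact ENNReal.ofReal_le_ofReal (hbound l hl t ht)
    _ ≤ ENNReal.ofReal A * ENNReal.ofReal (2 * ((1 + δ) / δ)) := by
        rw [lintegral_const_mul' _ _ ENNReal.ofReal_ne_top]
        gcongr
        exact lintegral_cosh_rpow_neg_le hδ₀
    _ ≤ _ := by
        rw [← ENNReal.ofReal_mul hA₀]
        refine ENNReal.ofReal_le_ofReal ?_
        calc A * (2 * ((1 + δ) / δ)) ≤ A * (2 * ((1 + ‖l‖) / δ)) := by gcongr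
          _ = _ := by
              rw [hA, pow_succ]
              ring

theorem stmt6 (m₁ m₂ : ℕ) (hm₁ : 1 ≤ m₁) :
    ∃ (C : ℝ) (K : ℕ), 0 < C ∧
      ∀ l : ℂ, rho m₁ m₂ < l.im →
        (∫⁻ t in Set.Ioi (0 : ℝ), ENNReal.ofReal (‖bfun m₁ m₂ l t‖ * Del m₁ m₂ t)) ≤
          ENNReal.ofReal (C * (1 + ‖l‖) ^ K / (l.im - rho m₁ m₂)) := by
  obtain ⟨C, hC, hbound⟩ := stmt6_general (m₁ := m₁) (m₂ := m₂) (by lia)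
  exact ⟨C, _, hC, hbound⟩

end
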